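/- arXiv:2001.00021 — 7 statements merged into one kernel-verified Lean document; each statement's English description precedes it below -/
import Mathlib

section
/- Let ι be a finite nonempty index set, m a natural number, and for each i ∈ ι let λ_i ∈ ℝ^m be a vector of nonnegative reals with t_i := Σ_j λ_{ij} > 0, and set T := Σ_i t_i. Then, as real k tends to 1 with k ≠ 1, the quantity (1/(1−k)) · log₂( ( Σ_i Σ_j λ_{ij}^k ) / ( Σ_i t_i^k ) ) converges to Σ_i (t_i / T) · H(λ_i / t_i), where H(p) = −Σ_j p_j log₂ p_j (with 0·log₂0 = 0) is the base-2 Shannon entropy and λ^k denotes the real power. -/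
/-!
Put `N k = ∑ i, ∑ j, lam i j ^ k`, `D k = ∑ i, t i ^ k` and `F k = log₂ (N k / D k)`. Since
`N 1 = D 1 = T`, we have `F 1 = 0`, so the quasi-`k` entropy is minus the difference quotient of `F`
at `1`, and its limit is
`-F' 1 = (D' 1 - N' 1) / (T log 2) = ∑ i, (t i log t i - ∑ j, lam i j log (lam i j)) / (T log 2)`.
The `i`-th summand is `t i / T` times the Shannon entropy of `lam i / t i`, by splitting the
logarithm of each quotient.
-/

/-- The zero base is covered too: `0 ^ k = 0` for `k` near `1`, and `0 * log 0 = 0`. -/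
lemma hasDerivAt_rpow_exponent_one {a : ℝ} (ha : 0 ≤ a) :
    HasDerivAt (fun k : ℝ => a ^ k) (a * Real.log a) 1 := by
  rcases ha.eq_or_lt with rfl | ha
  · have h : (fun k : ℝ => (0 : ℝ) ^ k) =ᶠ[nhds 1] fun _ => 0 := by
      filter_upwards [isOpen_ne.mem_nhds (one_ne_zero : (1 : ℝ) ≠ 0)] with k hk
      exact Real.zero_rpow hk
    simpa using (hasDerivAt_const (1 : ℝ) (0 : ℝ)).congr_of_eventuallyEq h
  · simpa using (Real.hasStrictDerivAt_const_rpow ha 1).hasDerivAt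

/-- Scaling a vector `p` with sum `t` by `1 / t` and multiplying its entropy by `t`. -/
lemma mul_shannon_normalized {m : ℕ} (p : Fin m → ℝ) {t : ℝ} (ht : 0 < t)
    (hsum : ∑ j, p j = t) :
    t * (-∑ j, (p j / t) * Real.logb 2 (p j / t)) =
      (t * Real.log t - ∑ j, p j * Real.log (p j)) / Real.log 2 := by
  have h : ∀ j, t * ((p j / t) * Real.logb 2 (p j / t)) =
      (p j * Real.log (p j) - p j * Real.log t) / Real.log 2 := by
    intro j
    rcases eq_or_ne (p j) 0 with h0 | h0
    · simp [h0]
    · rw [Real.logb, Real.log_div h0 ht.ne']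
      field_simp
  rw [mul_neg, Finset.mul_sum, Finset.sum_congr rfl fun j _ => h j, ← Finset.sum_div,
    Finset.sum_sub_distrib, ← Finset.sum_mul, hsum]
  ring

/-- The quasi-`k` entropy of a collection of non-normalized states (given here by
their eigenvalue vectors `lam i`) converges, as `k → 1`, to the trace-weighted
average of the base-2 Shannon entropies of the normalized states. -/
theorem quasiEntropy_tendsto_avg_entropy
    {ι : Type*} [Fintype ι] [Nonempty ι] (m : ℕ)
    (lam : ι → Fin m → ℝ) (hnn : ∀ i j, 0 ≤ lam i j)
    (ht : ∀ i, 0 < ∑ j, lam i j) :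
    Filter.Tendsto
      (fun k : ℝ =>
        (1 / (1 - k)) *
          Real.logb 2 ((∑ i, ∑ j, lam i j ^ k) / (∑ i, (∑ j, lam i j) ^ k)))
      (nhdsWithin 1 {(1 : ℝ)}ᶜ)
      (nhds (∑ i, ((∑ j, lam i j) / (∑ i', ∑ j, lam i' j)) *
        (-∑ j, (lam i j / (∑ j', lam i j')) *
            Real.logb 2 (lam i j / (∑ j', lam i j'))))) := by
  have hT : 0 < ∑ i, ∑ j, lam i j :=
    Finset.sum_pos (fun i _ => ht i) Finset.univ_nonempty
  have hN : HasDerivAt (fun k : ℝ => ∑ i, ∑ j, lam i j ^ k)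
      (∑ i, ∑ j, lam i j * Real.log (lam i j)) 1 :=
    HasDerivAt.fun_sum fun i _ => HasDerivAt.fun_sum fun j _ =>
      hasDerivAt_rpow_exponent_one (hnn i j)
  have hD : HasDerivAt (fun k : ℝ => ∑ i, (∑ j, lam i j) ^ k)
      (∑ i, (∑ j, lam i j) * Real.log (∑ j, lam i j)) 1 :=
    HasDerivAt.fun_sum fun i _ => hasDerivAt_rpow_exponent_one (ht i).le
  have hquot := hN.fun_div hD (by simpa using hT.ne')
  have hF := ((hquot.log (by simp [hT.ne'])).div_const (Real.log 2)).tendsto_slope.neg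
  have hlim : ∑ i, ((∑ j, lam i j) / (∑ i', ∑ j, lam i' j)) *
        (-∑ j, (lam i j / (∑ j', lam i j')) * Real.logb 2 (lam i j / (∑ j', lam i j'))) =
      (∑ i, (∑ j, lam i j) * Real.log (∑ j, lam i j) -
        ∑ i, ∑ j, lam i j * Real.log (lam i j)) / Real.log 2 / ∑ i, ∑ j, lam i j := by
    rw [← Finset.sum_sub_distrib, Finset.sum_div, Finset.sum_div]
    refine Finset.sum_congr rfl fun i _ => ?_
    rw [div_mul_eq_mul_div, mul_shannon_normalized (lam i) (ht i) rfl]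
  rw [hlim]
  convert hF using 1
  · funext k
    -- At `k = 1` the logarithm vanishes, so the slope of `F` from `1` has numerator `F k`.
    simp only [slope_def_field, Real.rpow_one, div_self hT.ne', Real.log_one, zero_div, sub_zero,
      Real.logb]
    rw [← neg_sub k 1, div_neg]
    ring
  · simp only [Real.rpow_one, div_self hT.ne', div_one]
    have hlog : Real.log 2 ≠ 0 := (Real.log_pos one_lt_two).ne'
    congr 1
    field_simp
    ring
end

section
/- Let p : ℝ → ℝ be a real polynomial of degree at most d, and let ε > 0 and δ ≥ 0 be reals such that |p(x)| ≤ δ for all x with |x| ≤ ε. Then |p(1)| ≤ δ · e^{2d(1 + 1/ε)}. -/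
/-!
If `ε ≥ 1` the point `1` lies in the interval where `p` is controlled. Otherwise rescale: for
`δ > 0` the polynomial `p(ε x) / δ` is bounded by `1` on `[-1, 1]`, so the extremal property of
Chebyshev polynomials outside `[-1, 1]` bounds its value at `x = 1 / ε` by `T_d(1 / ε)`. Writing
`x = cosh θ` with `θ ≥ 0` gives `T_d(x) = cosh (d θ) ≤ (exp θ) ^ d ≤ (2 x) ^ d ≤ exp (2 d x)`.
The case `δ = 0` follows from the case `δ > 0` by letting `δ` decrease to `0`.
-/

open Polynomial in
lemma eval_chebyshevT_le_exp (d : ℕ) {x : ℝ} (hx : 1 ≤ x) :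
    (Chebyshev.T ℝ d).eval x ≤ Real.exp (2 * d * x) := by
  have hc : Real.cosh (Real.arcosh x) = x := Real.cosh_arcosh hx
  have h0 : 0 ≤ Real.arcosh x := Real.arcosh_nonneg hx
  set θ := Real.arcosh x
  have hT : (Chebyshev.T ℝ d).eval x = Real.cosh (d * θ) := by
    have := Chebyshev.T_real_cosh θ d
    rw [hc] at this
    exact_mod_cast this
  have hdθ : 0 ≤ d * θ := by positivity
  have h1 : Real.cosh (d * θ) ≤ Real.exp (d * θ) := by
    have : Real.exp (-(d * θ)) ≤ Real.exp (d * θ) := Real.exp_le_exp.mpr (by linarith)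
    rw [Real.cosh_eq]
    linarith
  have h2 : Real.exp θ ≤ 2 * x := by
    have := Real.exp_pos (-θ)
    rw [Real.cosh_eq] at hc
    linarith
  have h3 : θ ≤ 2 * x := by linarith [Real.add_one_le_exp θ]
  rw [hT]
  refine h1.trans (Real.exp_le_exp.mpr ?_)
  nlinarith [mul_le_mul_of_nonneg_left h3 (Nat.cast_nonneg (α := ℝ) d)]

open Polynomial in
/-- The one-sided bound for `δ > 0`; the two-sided one follows by applying it to `-p`. -/
lemma eval_one_le_of_abs_le (p : ℝ[X]) (d : ℕ) (hd : p.natDegree ≤ d)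
    (ε δ : ℝ) (hε : 0 < ε) (hε1 : ε ≤ 1) (hδ : 0 < δ)
    (h : ∀ x : ℝ, |x| ≤ ε → |p.eval x| ≤ δ) :
    p.eval 1 ≤ δ * Real.exp (2 * d * (1 / ε)) := by
  have hx : 1 ≤ 1 / ε := (one_le_div hε).mpr hε1
  have hdeg : (C δ⁻¹ * p.comp (C ε * X)).degree ≤ d := by
    refine degree_le_of_natDegree_le ((natDegree_C_mul_le _ _).trans (natDegree_comp_le.trans ?_))
    calc p.natDegree * (C ε * X).natDegree ≤ p.natDegree * 1 :=
          Nat.mul_le_mul_left _ ((natDegree_C_mul_le _ _).trans natDegree_X_le)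
      _ ≤ d := by omega
  have key := Chebyshev.eval_iterate_derivative_le_of_forall_abs_le_one (k := 0) hx hdeg (by
    intro y hy
    have hy' : |ε * y| ≤ ε := by
      rw [abs_mul, abs_of_pos hε]
      exact mul_le_of_le_one_right hε.le (abs_le.mpr hy)
    have := h _ hy'
    simp only [eval_mul, eval_C, eval_comp, eval_X, abs_mul, abs_inv, abs_of_pos hδ]
    rw [inv_mul_le_iff₀ hδ]
    linarith)
  simp only [Function.iterate_zero, id, eval_mul, eval_C, eval_comp, eval_X,
    mul_one_div_cancel hε.ne'] at key
  rw [inv_mul_le_iff₀ hδ] at key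
  exact key.trans (mul_le_mul_of_nonneg_left (eval_chebyshevT_le_exp d hx) hδ.le)


/-- Paturi's lemma: if a real polynomial of degree at most `d` satisfies
`|p(x)| ≤ δ` for all `|x| ≤ ε`, then `|p(1)| ≤ δ e^{2d(1+1/ε)}`. -/
theorem paturi (p : Polynomial ℝ) (d : ℕ) (hd : p.natDegree ≤ d)
    (ε δ : ℝ) (hε : 0 < ε) (hδ : 0 ≤ δ)
    (h : ∀ x : ℝ, |x| ≤ ε → |p.eval x| ≤ δ) :
    |p.eval 1| ≤ δ * Real.exp (2 * d * (1 + 1 / ε)) := by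
  have hK : 1 ≤ Real.exp (2 * d * (1 + 1 / ε)) := Real.one_le_exp (by positivity)
  rcases le_total 1 ε with hε1 | hε1
  · exact (h 1 (by simpa using hε1)).trans (le_mul_of_one_le_right hδ hK)
  -- `δ` is increased by an arbitrary positive amount to stay away from `δ = 0`.
  refine le_of_forall_pos_le_add fun η hη => ?_
  set K := Real.exp (2 * d * (1 + 1 / ε))
  have hK0 : 0 < K := by linarith
  have hδ' : 0 < δ + η / K := by positivity
  have hb : ∀ x : ℝ, |x| ≤ ε → |p.eval x| ≤ δ + η / K := fun x hx =>
    (h x hx).trans (le_add_of_nonneg_right (by positivity))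
  have hexp : Real.exp (2 * d * (1 / ε)) ≤ K :=
    Real.exp_le_exp.mpr (mul_le_mul_of_nonneg_left (by linarith) (by positivity))
  have hfin : (δ + η / K) * Real.exp (2 * d * (1 / ε)) ≤ δ * K + η := by
    calc _ ≤ (δ + η / K) * K := mul_le_mul_of_nonneg_left hexp hδ'.le
      _ = δ * K + η := by field_simp
  have h1 := eval_one_le_of_abs_le p d hd ε _ hε hε1 hδ' hb
  have h2 := eval_one_le_of_abs_le (-p) d (by simpa using hd) ε _ hε hε1 hδ' (by simpa using hb)
  rw [Polynomial.eval_neg] at h2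
  exact (abs_le'.mpr ⟨h1, h2⟩).trans hfin
end

section
/- Let a > 0 and b > 0 be real constants, and let m, K : ℕ → ℕ be any functions satisfying m(n) ≥ n and K(n) ≥ 1 for all n. Then the quantity 2^{a·n·m(n)} · exp( b·m(n)·K(n)·(1 + m(n)²·K(n)) ) / (K(n))! tends to infinity as n → ∞. -/
/-!
The factorial cannot compensate the exponential: `K! ≤ K ^ K ≤ exp (K²)`, whereas the exponent
contains the term `b m³ K²`. As `m ≥ n`, eventually `b m³ ≥ 1`, so this term alone absorbs
`K!`. The factor `2 ^ (a n m)` is at least `1`, and what remains is at least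
`exp (b m K) ≥ b m K ≥ b n`, which tends to infinity.
-/

theorem factorial_le_exp_sq (k : ℕ) : (k.factorial : ℝ) ≤ Real.exp ((k : ℝ) ^ 2) := by
  have h1 : (k.factorial : ℝ) ≤ (k : ℝ) ^ k := by exact_mod_cast Nat.factorial_le_pow k
  have h2 : (k : ℝ) ≤ Real.exp k := by linarith [Real.add_one_le_exp (k : ℝ)]
  calc (k.factorial : ℝ) ≤ (k : ℝ) ^ k := h1
    _ ≤ Real.exp k ^ k := by gcongr
    _ = Real.exp ((k : ℝ) ^ 2) := by rw [← Real.exp_nat_mul, sq]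

/-- The error bound `2^{O(nm)}/K! · exp(O(mK(1+m²K)))` of the truncated-Taylor
worst-to-average-case interpolation diverges as `n → ∞` for every choice of
scalings of `m` and `K`. -/
theorem truncated_taylor_error_diverges (a b : ℝ) (ha : 0 < a) (hb : 0 < b)
    (m K : ℕ → ℕ) (hm : ∀ n, n ≤ m n) (hK : ∀ n, 1 ≤ K n) :
    Filter.Tendsto
      (fun n : ℕ =>
        (2 : ℝ) ^ (a * n * m n) *
          Real.exp (b * m n * K n * (1 + (m n : ℝ) ^ 2 * K n)) / (K n).factorial)
      Filter.atTop Filter.atTop := by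
  have hlim : Filter.Tendsto (fun n : ℕ => b * (n : ℝ)) Filter.atTop Filter.atTop :=
    tendsto_natCast_atTop_atTop.const_mul_atTop hb
  refine Filter.tendsto_atTop_mono' _ ?_ hlim
  filter_upwards [hlim.eventually_ge_atTop 1, Filter.eventually_ge_atTop 1] with n hbn hn
  have hmn : (n : ℝ) ≤ m n := by exact_mod_cast hm n
  have hm1 : (1 : ℝ) ≤ m n := by exact_mod_cast hn.trans (hm n)
  have hK1 : (1 : ℝ) ≤ K n := by exact_mod_cast hK n
  have hbm : b * n ≤ b * m n := by gcongr
  have hbm3 : 1 ≤ b * m n * (m n : ℝ) ^ 2 :=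
    one_le_mul_of_one_le_of_one_le (hbn.trans hbm) (one_le_pow₀ hm1)
  have hexp : b * m n * K n + (K n : ℝ) ^ 2 ≤
      b * m n * K n * (1 + (m n : ℝ) ^ 2 * K n) := by
    nlinarith [mul_le_mul_of_nonneg_right hbm3 (sq_nonneg (K n : ℝ))]
  have hlow : b * n ≤ Real.exp (b * m n * K n) := by
    have h1 : b * m n ≤ b * m n * K n := le_mul_of_one_le_right (by positivity) hK1
    linarith [Real.add_one_le_exp (b * m n * K n)]
  have h2 : (1 : ℝ) ≤ (2 : ℝ) ^ (a * n * m n) :=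
    Real.one_le_rpow (by norm_num) (by positivity)
  rw [le_div_iff₀ (by positivity)]
  calc b * n * (K n).factorial
      ≤ Real.exp (b * m n * K n) * Real.exp ((K n : ℝ) ^ 2) := by
        gcongr
        exact factorial_le_exp_sq (K n)
    _ = Real.exp (b * m n * K n + (K n : ℝ) ^ 2) := (Real.exp_add _ _).symm
    _ ≤ Real.exp (b * m n * K n * (1 + (m n : ℝ) ^ 2 * K n)) := Real.exp_le_exp.mpr hexp
    _ ≤ _ := le_mul_of_one_le_left (Real.exp_pos _).le h2
end

section
/- For every ε with 0 < ε ≤ 1 there exists a constant c with 0 ≤ c < 1 such that for all p with 1/2 ≤ p < 1, H₂(p + ε(1−p)) ≤ c · H₂(p), where H₂ is the binary entropy function. -/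
/-!
Put `x = 1 - p ∈ (0, 1/2]` and `l = 1 - ε ∈ [0, 1)`. By the symmetry of `H₂` the claim reads
`H₂(l x) ≤ c H₂(x)`, and the optimal constant `c = H₂(l/2) / log 2` works. It is less than `1`
since `l/2 ≠ 1/2`, and at least `l` since `H₂` is concave. The condition `l ≤ c` makes
`x ↦ c H₂(x) - H₂(l x)` concave on `[0, 1/2]`: its second derivative is
`(-c (1 - l x) + l (1 - x)) / (x (1 - x) (1 - l x)) ≤ 0`. This function vanishes at `0` and, by
the choice of `c`, at `1/2`, so it is nonnegative in between.
-/

lemma concaveOn_mul_binEntropy_sub (l c : ℝ) (hl0 : 0 < l) (hl1 : l < 1) (hlc : l ≤ c) :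
    ConcaveOn ℝ (Set.Icc 0 (1 / 2))
      (fun x => c * Real.binEntropy x - Real.binEntropy (l * x)) := by
  refine concaveOn_of_hasDerivWithinAt2_nonpos (convex_Icc _ _)
    (f' := fun x => c * (Real.log (1 - x) - Real.log x)
      - (Real.log (1 - l * x) - Real.log (l * x)) * l)
    (f'' := fun x => c * (-1 / (1 - x) - 1 / x) - (-l / (1 - l * x) - l / (l * x)) * l)
    (by fun_prop) ?_ ?_ ?_
  all_goals
    intro x hx
    rw [interior_Icc] at hx
    obtain ⟨h0, h1⟩ := hx
    have h2 : 0 < l * x := mul_pos hl0 h0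
    have h3 : l * x < 1 := by nlinarith
    have h4 : 0 < 1 - x := by linarith
    have h5 : 0 < 1 - l * x := by linarith
    have hd : HasDerivAt (fun y => l * y) l x := by
      simpa using (hasDerivAt_id x).const_mul l
  · have e1 := (Real.hasDerivAt_binEntropy h0.ne' (by linarith)).const_mul c
    have e2 := (Real.hasDerivAt_binEntropy h2.ne' h3.ne).comp x hd
    exact (e1.sub e2).hasDerivWithinAt
  · have e1 := ((((hasDerivAt_id x).const_sub 1).log h4.ne').sub
      ((hasDerivAt_id x).log h0.ne')).const_mul c
    have e2 := (((hd.const_sub 1).log h5.ne').sub (hd.log h2.ne')).mul_const l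
    exact (e1.sub e2).hasDerivWithinAt
  · have key : c * (-1 / (1 - x) - 1 / x) - (-l / (1 - l * x) - l / (l * x)) * l
        = (-c * (1 - l * x) + l * (1 - x)) / (x * (1 - x) * (1 - l * x)) := by
      have n2 := h4.ne'
      have n3 : 1 - x * l ≠ 0 := by rw [mul_comm]; exact h5.ne'
      rw [mul_comm l x]
      field_simp
      ring
    simp only [key]
    apply div_nonpos_of_nonpos_of_nonneg
    · nlinarith
    · positivity

/-- Uniform multiplicative decay of binary entropy: for every `0 < ε ≤ 1` there
is a constant `c < 1` with `H₂(p + ε(1−p)) ≤ c · H₂(p)` for all `1/2 ≤ p < 1`. -/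
theorem binEntropy_uniform_decay (ε : ℝ) (hε0 : 0 < ε) (hε1 : ε ≤ 1) :
    ∃ c : ℝ, 0 ≤ c ∧ c < 1 ∧
      ∀ p : ℝ, 1 / 2 ≤ p → p < 1 →
        Real.binEntropy (p + ε * (1 - p)) ≤ c * Real.binEntropy p := by
  -- For `ε = 1` the left side is `H₂(1) = 0`; the concavity lemma needs `0 < 1 - ε`.
  rcases hε1.eq_or_lt with rfl | hε1
  · exact ⟨0, le_rfl, one_pos, fun p _ _ => by simp⟩
  have hlog : 0 < Real.log 2 := Real.log_pos one_lt_two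
  have hhalf : Real.binEntropy (1 / 2) = Real.log 2 := by
    rw [one_div, Real.binEntropy_two_inv]
  set l := 1 - ε with hl
  have hl0 : 0 < l := by linarith
  have hl1 : l < 1 := by linarith
  have hlc : l ≤ Real.binEntropy (l * (1 / 2)) / Real.log 2 := by
    rw [le_div_iff₀ hlog]
    have h := Real.strictConcave_binEntropy.concaveOn.2
      (show (0 : ℝ) ∈ Set.Icc 0 1 by norm_num) (show (1 / 2 : ℝ) ∈ Set.Icc 0 1 by norm_num)
      (show 0 ≤ 1 - l by linarith) hl0.le (by ring)
    simpa [hhalf] using h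
  refine ⟨Real.binEntropy (l * (1 / 2)) / Real.log 2, hl0.le.trans hlc, ?_, ?_⟩
  · rw [div_lt_one hlog, Real.binEntropy_lt_log_two]
    intro h
    linarith
  · intro p hp hp1
    have h := (concaveOn_mul_binEntropy_sub l _ hl0 hl1 hlc).2
      (show (0 : ℝ) ∈ Set.Icc 0 (1 / 2) by norm_num)
      (show (1 / 2 : ℝ) ∈ Set.Icc 0 (1 / 2) by norm_num)
      (show 0 ≤ 1 - 2 * (1 - p) by linarith) (show 0 ≤ 2 * (1 - p) by linarith) (by ring)
    have hx : 2 * (1 - p) * (1 / 2) = 1 - p := by ring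
    simp only [smul_eq_mul, mul_zero, Real.binEntropy_zero, zero_add, hx, hhalf,
      div_mul_cancel₀ _ hlog.ne', sub_self, Real.binEntropy_one_sub, sub_nonneg] at h
    rw [← Real.binEntropy_one_sub (p + ε * (1 - p))]
    have he : 1 - (p + ε * (1 - p)) = l * (1 - p) := by rw [hl]; ring
    rwa [he]
end

section
/- For every ε with 0 < ε ≤ 1, the ratio H₂(p + ε(1−p)) / H₂(p) converges to 1 − ε as p tends to 1 from the left, where H₂ is the binary entropy function. -/
/-!
With `x = 1 - p`, the symmetry `H₂(p) = H₂(1 - p)` turns the ratio into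
`H₂((1 - ε) x) / H₂(x)` as `x → 0⁺`. The dominant term of `H₂(c x)` near `0` is `-c x log x`:
`log (c x) = log c + log x` and `log (1 - c x) = O(x)`, so the remaining terms are negligible
because `log x → -∞`. This is `binEntropy_mul_div_tendsto`; taking its quotient for `c = 1 - ε`
and `c = 1` gives the limit `1 - ε`.
-/

open Filter Topology Real

lemma binEntropy_mul_div_tendsto (c : ℝ) (hc : 0 ≤ c) :
    Tendsto (fun x : ℝ => binEntropy (c * x) / (-(x * log x))) (𝓝[>] 0) (𝓝 c) := by
  rcases hc.eq_or_lt with rfl | hc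
  · simp
  have hinv : Tendsto (fun x : ℝ => (log x)⁻¹) (𝓝[>] 0) (𝓝 0) :=
    tendsto_inv_atBot_zero.comp tendsto_log_nhdsGT_zero
  have hderiv : HasDerivAt (fun x : ℝ => log (1 - c * x)) (-c) 0 := by
    have h := (((hasDerivAt_id (0 : ℝ)).const_mul c).const_sub 1).log (by simp)
    simpa using h
  have hslope : Tendsto (fun x : ℝ => x⁻¹ * log (1 - c * x)) (𝓝[>] 0) (𝓝 (-c)) := by
    simpa using hderiv.tendsto_slope_zero_right
  have hlin : Tendsto (fun x : ℝ => 1 - c * x) (𝓝[>] 0) (𝓝 1) := by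
    have h : Continuous fun x : ℝ => 1 - c * x := by fun_prop
    simpa using (h.tendsto 0).mono_left nhdsWithin_le_nhds
  have hlim : Tendsto (fun x : ℝ => c * (log c * (log x)⁻¹ + 1)
      + (1 - c * x) * (x⁻¹ * log (1 - c * x)) * (log x)⁻¹) (𝓝[>] 0) (𝓝 c) := by
    simpa using (((hinv.const_mul (log c)).add_const 1).const_mul c).add
      ((hlin.mul hslope).mul hinv)
  refine hlim.congr' ?_
  filter_upwards [Ioo_mem_nhdsGT (zero_lt_one (α := ℝ))] with x hx
  have hx0 : x ≠ 0 := hx.1.ne'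
  have hl : log x ≠ 0 := (log_neg hx.1 hx.2).ne
  rw [binEntropy_eq_negMulLog_add_negMulLog_one_sub, negMulLog, negMulLog, log_mul hc.ne' hx0]
  field_simp
  ring

/-- As `p → 1⁻`, the ratio `H₂(p + ε(1−p)) / H₂(p)` tends to `1 − ε`. -/
theorem binEntropy_ratio_tendsto (ε : ℝ) (hε0 : 0 < ε) (hε1 : ε ≤ 1) :
    Filter.Tendsto
      (fun p : ℝ => Real.binEntropy (p + ε * (1 - p)) / Real.binEntropy p)
      (nhdsWithin 1 (Set.Iio 1)) (nhds (1 - ε)) := by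
  have hsub : Tendsto (fun p : ℝ => 1 - p) (𝓝[<] 1) (𝓝[>] 0) := by
    refine tendsto_nhdsWithin_iff.2 ⟨?_, ?_⟩
    · have h : Continuous fun p : ℝ => 1 - p := by fun_prop
      simpa using (h.tendsto 1).mono_left nhdsWithin_le_nhds
    · filter_upwards [self_mem_nhdsWithin] with p hp
      exact Set.mem_Ioi.2 (sub_pos.2 (Set.mem_Iio.1 hp))
  have hquot := ((binEntropy_mul_div_tendsto (1 - ε) (sub_nonneg.2 hε1)).div
    (binEntropy_mul_div_tendsto 1 zero_le_one) one_ne_zero).comp hsub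
  rw [div_one] at hquot
  refine hquot.congr' ?_
  filter_upwards [Ioo_mem_nhdsLT (zero_lt_one (α := ℝ))] with p hp
  have hx : 0 < 1 - p := sub_pos.2 hp.2
  have hl : log (1 - p) ≠ 0 := (log_neg hx (by linarith [hp.1])).ne
  have hnum : binEntropy ((1 - ε) * (1 - p)) = binEntropy (p + ε * (1 - p)) := by
    rw [← binEntropy_one_sub]
    congr 1
    ring
  simp only [Function.comp_apply, Pi.div_apply, one_mul, binEntropy_one_sub, hnum]
  exact div_div_div_cancel_right₀ (neg_ne_zero.2 (mul_ne_zero hx.ne' hl)) _ _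
end

section
/- For real q > 1 define w(q) = 2/(q+1), J₁(q) = (1/4)·ln( (q² − w(q)²)/(w(q)²·q² − 1) ), J₃(q) = −(1/2)·ln( w(q)·(q²−1) / √( (q² − w(q)²)·(q²·w(q)² − 1) ) ), and f(q) = sinh(2J₁(q))² + 2·sinh(2J₁(q))·sinh(2J₃(q)). Then f(2) < 1, f(3) < 1, f(4) > 1, f(3.2) < 1, f(3.3) > 1, and there exists q_c ∈ (3.2, 3.3) with f(q_c) = 1. -/
/-!
Put `A = q² - w²`, `B = w²q² - 1`, `C = w(q² - 1)`, all positive for `q > 1`. Then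
`exp (2J₁) = √(A/B)` and `exp (2J₃) = √(AB)/C`, so that
`sinh (2J₁) = (A - B) / (2√(AB))` and `sinh (2J₃) = (AB - C²) / (2C√(AB))`. The square roots pair up
in the criticality function, which is therefore a rational function of `q` on `q > 1`
(`fCHR_eq`). The five inequalities become rational arithmetic, and the critical point comes from the
intermediate value theorem on `[3.2, 3.3]`.
-/

/-- Measurement weight `w(q) = 2/(q+1)`. -/
noncomputable def wCHR (q : ℝ) : ℝ := 2 / (q + 1)

/-- Ferromagnetic coupling `J₁` of the anisotropic triangular Ising model. -/
noncomputable def J1CHR (q : ℝ) : ℝ :=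
  (1 / 4) * Real.log ((q ^ 2 - wCHR q ^ 2) / (wCHR q ^ 2 * q ^ 2 - 1))

/-- Antiferromagnetic coupling `J₃` of the anisotropic triangular Ising model. -/
noncomputable def J3CHR (q : ℝ) : ℝ :=
  -(1 / 2) * Real.log (wCHR q * (q ^ 2 - 1) /
    Real.sqrt ((q ^ 2 - wCHR q ^ 2) * (q ^ 2 * wCHR q ^ 2 - 1)))

/-- Criticality function of the anisotropic triangular Ising model. -/
noncomputable def fCHR (q : ℝ) : ℝ :=
  Real.sinh (2 * J1CHR q) ^ 2 + 2 * Real.sinh (2 * J1CHR q) * Real.sinh (2 * J3CHR q)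

theorem wCHR_pos {q : ℝ} (hq : 1 < q) : 0 < wCHR q := by
  unfold wCHR; positivity

theorem wCHR_lt_one {q : ℝ} (hq : 1 < q) : wCHR q < 1 := by
  unfold wCHR; rw [div_lt_one (by linarith)]; linarith

theorem one_lt_wCHR_mul {q : ℝ} (hq : 1 < q) : 1 < wCHR q * q := by
  unfold wCHR; rw [div_mul_eq_mul_div, lt_div_iff₀ (by linarith)]; linarith

theorem sinh_half_log_div {A B : ℝ} (hA : 0 < A) (hB : 0 < B) :
    Real.sinh (2 * ((1 / 4) * Real.log (A / B))) = (A - B) / (2 * √(A * B)) := by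
  have h : 2 * ((1 / 4) * Real.log (A / B)) = Real.log (√A / √B) := by
    rw [← Real.sqrt_div hA.le, Real.log_sqrt (by positivity)]; ring
  have hA' := Real.sqrt_pos.2 hA
  have hB' := Real.sqrt_pos.2 hB
  rw [h, Real.sinh_log (by positivity), Real.sqrt_mul hA.le]
  field_simp
  rw [Real.sq_sqrt hA.le, Real.sq_sqrt hB.le]

theorem sinh_neg_log_div_sqrt {C D : ℝ} (hC : 0 < C) (hD : 0 < D) :
    Real.sinh (2 * (-(1 / 2) * Real.log (C / √D))) = (D - C ^ 2) / (2 * C * √D) := by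
  have hD' := Real.sqrt_pos.2 hD
  have h : 2 * (-(1 / 2) * Real.log (C / √D)) = -Real.log (C / √D) := by ring
  rw [h, Real.sinh_neg, Real.sinh_log (by positivity)]
  field_simp
  rw [Real.sq_sqrt hD.le]
  ring

/-- The closed form `(A - B)² / (4AB) + (A - B)(AB - C²) / (2CAB)` of the criticality function,
with `A = q² - w²`, `B = w²q² - 1`, `C = w(q² - 1)`. -/
noncomputable def fCHRRat (q : ℝ) : ℝ :=
  let A := q ^ 2 - wCHR q ^ 2
  let B := wCHR q ^ 2 * q ^ 2 - 1
  let C := wCHR q * (q ^ 2 - 1)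
  (A - B) ^ 2 / (4 * (A * B)) + (A - B) * (A * B - C ^ 2) / (2 * C * (A * B))

theorem CHR_pos {q : ℝ} (hq : 1 < q) :
    0 < q ^ 2 - wCHR q ^ 2 ∧ 0 < wCHR q ^ 2 * q ^ 2 - 1 ∧ 0 < wCHR q * (q ^ 2 - 1) := by
  have h0 := wCHR_pos hq
  have h1 := wCHR_lt_one hq
  have h2 := one_lt_wCHR_mul hq
  exact ⟨by nlinarith, by nlinarith, mul_pos h0 (by nlinarith)⟩

theorem fCHR_eq {q : ℝ} (hq : 1 < q) : fCHR q = fCHRRat q := by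
  obtain ⟨hA, hB, hC⟩ := CHR_pos hq
  simp only [fCHR, J1CHR, J3CHR, fCHRRat]
  rw [mul_comm (q ^ 2) (wCHR q ^ 2)]
  generalize q ^ 2 - wCHR q ^ 2 = A at *
  generalize wCHR q ^ 2 * q ^ 2 - 1 = B at *
  generalize wCHR q * (q ^ 2 - 1) = C at *
  have hAB := mul_pos hA hB
  rw [sinh_half_log_div hA hB, sinh_neg_log_div_sqrt hC hAB]
  generalize A - B = E
  generalize A * B = D at *
  have hD' := Real.sqrt_pos.2 hAB
  have hD := Real.sq_sqrt hAB.le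
  generalize √D = s at *
  subst hD
  field_simp
  ring

theorem continuousOn_fCHR : ContinuousOn fCHR (Set.Icc 3.2 3.3) := by
  have hq : ∀ q ∈ Set.Icc (3.2 : ℝ) 3.3, 1 < q := fun q h => by
    have := h.1
    norm_num at this
    linarith
  have hw : ContinuousOn wCHR (Set.Icc 3.2 3.3) := by
    unfold wCHR
    exact continuousOn_const.div (by fun_prop) fun q h => by linarith [hq q h]
  refine ContinuousOn.congr (f := fCHRRat) ?_ fun q h => fCHR_eq (hq q h)
  unfold fCHRRat
  refine ContinuousOn.add (ContinuousOn.div (by fun_prop) (by fun_prop) ?_)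
    (ContinuousOn.div (by fun_prop) (by fun_prop) ?_)
  all_goals
    intro q h
    obtain ⟨hA, hB, hC⟩ := CHR_pos (hq q h)
    positivity

/-- The anisotropic triangular Ising model of the CHR effective dynamics is
disordered for `q = 2, 3`, ordered for `q = 4`, and has a critical point
`q_c ∈ (3.2, 3.3)`. -/
theorem CHR_phase_transition :
    fCHR 2 < 1 ∧ fCHR 3 < 1 ∧ fCHR 4 > 1 ∧ fCHR 3.2 < 1 ∧ fCHR 3.3 > 1 ∧
      ∃ qc ∈ Set.Ioo (3.2 : ℝ) 3.3, fCHR qc = 1 := by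
  have h32 : fCHR 3.2 < 1 := by rw [fCHR_eq (by norm_num)]; norm_num [fCHRRat, wCHR]
  have h33 : fCHR 3.3 > 1 := by rw [fCHR_eq (by norm_num)]; norm_num [fCHRRat, wCHR]
  refine ⟨?_, ?_, ?_, h32, h33, ?_⟩
  · rw [fCHR_eq (by norm_num)]; norm_num [fCHRRat, wCHR]
  · rw [fCHR_eq (by norm_num)]; norm_num [fCHRRat, wCHR]
  · rw [fCHR_eq (by norm_num)]; norm_num [fCHRRat, wCHR]
  · obtain ⟨q, hq, h⟩ := intermediate_value_Ioo (by norm_num) continuousOn_fCHR ⟨h32, h33⟩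
    exact ⟨q, hq, h⟩
end

section
/- Let θ ∈ (0, π), set c = cos(θ/2) and s = sin(θ/2), and define the 2×2 real matrices M₀ = [[c,0],[0,s]] and M₁ = [[s,0],[0,c]]. Let t, a₀, a₁, b₀, b₁ be natural numbers with a₀ + a₁ + b₀ + b₁ = 2t and set s₁ = a₁ + b₁. Then (M₀^{a₀}·M₁^{a₁}) ⊗ (M₀^{b₀}·M₁^{b₁}) applied to the unnormalized EPR vector |00⟩ + |11⟩ equals c^{2t−s₁}·s^{s₁} · ( |00⟩ + tan(θ/2)^{2t − 2s₁} · |11⟩ ), where the tangent is raised to the (possibly negative) integer power 2t − 2s₁. -/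
open Matrix

/-!
Both Kraus operators are diagonal, so the string of measurements acts on each component of the EPR
vector by a scalar (`diag_string`): `|00⟩` acquires `c^n s^m` and `|11⟩` acquires `s^n c^m`, where
`m = a₁ + b₁` and `n = a₀ + b₀ = 2t - m` count the two outcomes. As `c` and `s` are nonzero for
`0 < θ < π`, the ratio of the two scalars is `(s / c)^(n - m) = tan (θ/2)^(2t - 2m)`
(`swap_pow_eq`).
-/

lemma diag_string (c s : ℝ) (a b : ℕ) :
    (!![c, 0; 0, s] : Matrix (Fin 2) (Fin 2) ℝ) ^ a * !![s, 0; 0, c] ^ b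
      = !![c ^ a * s ^ b, 0; 0, s ^ a * c ^ b] := by
  have diag_pow (x y : ℝ) (k : ℕ) :
      (!![x, 0; 0, y] : Matrix (Fin 2) (Fin 2) ℝ) ^ k = !![x ^ k, 0; 0, y ^ k] := by
    induction k with
    | zero => simp [Matrix.one_fin_two]
    | succ k ih => rw [pow_succ, ih]; simp [pow_succ]
  rw [diag_pow, diag_pow]
  simp

lemma swap_pow_eq {c s : ℝ} (hc : c ≠ 0) (hs : s ≠ 0) (n m : ℕ) :
    s ^ n * c ^ m = c ^ n * s ^ m * (s / c) ^ ((n : ℤ) - m) := by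
  rw [zpow_sub₀ (div_ne_zero hs hc), zpow_natCast, zpow_natCast, div_pow, div_pow]
  field_simp

/-- Toy-model computation: the (unnormalized) state of an EPR pair after `2t`
weak measurements with Kraus operators `M₀, M₁`, of which `s₁ = a₁ + b₁` gave
the `M₁` outcome, is `c^{2t−s₁} s^{s₁} (|00⟩ + tan(θ/2)^{2t−2s₁}|11⟩)`. -/
theorem toy_model_epr_measurement (θ : ℝ) (hθ0 : 0 < θ) (hθπ : θ < Real.pi)
    (t a0 a1 b0 b1 : ℕ) (hsum : a0 + a1 + b0 + b1 = 2 * t) :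
    let c : ℝ := Real.cos (θ / 2)
    let s : ℝ := Real.sin (θ / 2)
    let M0 : Matrix (Fin 2) (Fin 2) ℝ := !![c, 0; 0, s]
    let M1 : Matrix (Fin 2) (Fin 2) ℝ := !![s, 0; 0, c]
    let s1 : ℕ := a1 + b1
    let epr : Fin 2 × Fin 2 → ℝ := fun p => if p = (0, 0) ∨ p = (1, 1) then 1 else 0
    (Matrix.kroneckerMap (· * ·) (M0 ^ a0 * M1 ^ a1) (M0 ^ b0 * M1 ^ b1)).mulVec epr
      = fun p => c ^ (2 * t - s1) * s ^ s1 *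
          (if p = (0, 0) then 1
           else if p = (1, 1) then Real.tan (θ / 2) ^ ((2 * t : ℤ) - 2 * s1)
           else 0) := by
  intro c s M0 M1 s1 epr
  have hc : c ≠ 0 :=
    (Real.cos_pos_of_mem_Ioo ⟨by linarith [Real.pi_pos], by linarith⟩).ne'
  have hs : s ≠ 0 :=
    (Real.sin_pos_of_pos_of_lt_pi (by linarith) (by linarith [Real.pi_pos])).ne'
  have hn : 2 * t - s1 = a0 + b0 := by omega
  have hz : (2 * t : ℤ) - 2 * s1 = ((a0 + b0 : ℕ) : ℤ) - (s1 : ℕ) := by omega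
  have ht : Real.tan (θ / 2) = s / c := Real.tan_eq_sin_div_cos _
  have key := swap_pow_eq hc hs (a0 + b0) s1
  rw [hn, hz, ht, diag_string, diag_string]
  funext ⟨i, j⟩
  fin_cases i <;> fin_cases j <;>
    simp [Matrix.mulVec, dotProduct, Fintype.sum_prod_type, epr]
  · simp only [s1]; ring
  · refine Eq.trans ?_ (by exact_mod_cast key)
    simp only [s1]; ring
end
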